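/- For every integer n ≥ 3, φ(C(n,3)) = n, and the unique triangle family 𝒯 (up to relabeling of vertices) with |𝒯| = C(n,3) and λ(𝒯) = n is the family of all 3-element subsets of an n-element set. Equivalently, the minimum of |𝒯| over all triangle families 𝒯 with λ(𝒯) ≥ n equals C(n,3), and the unique minimizer is the family of all 3-element subsets of an n-element set. -/

import Mathlib

open Finset Matrix

/-- The sign `[T : e]` of an edge `e` in a triangle `T`. -/
noncomputable def triSign (T e : Finset ℕ) : ℝ :=
  if e ⊆ T ∧ e.card = 2 ∧ T.card = 3 then
    if (T \ e).max = T.max ∨ (T \ e).min = T.min then 1 else -1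
  else 0

/-- A triangle family: a nonempty finite set of 3-element subsets of ℕ. -/
def IsTriFam (F : Finset (Finset ℕ)) : Prop :=
  F.Nonempty ∧ ∀ T ∈ F, T.card = 3

/-- The edges of the support graph of a triangle family. -/
def edgesOf (F : Finset (Finset ℕ)) : Finset (Finset ℕ) :=
  F.biUnion fun T => T.powersetCard 2

/-- The vertices of the support graph of a triangle family. -/
def vertsOf (F : Finset (Finset ℕ)) : Finset ℕ :=
  F.biUnion id

/-- The signed edge-triangle incidence matrix of a triangle family. -/
noncomputable def delta1 (F : Finset (Finset ℕ)) :
    Matrix {T // T ∈ F} {e // e ∈ edgesOf F} ℝ :=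
  Matrix.of fun T e => triSign T.1 e.1

/-- The smallest positive eigenvalue of a matrix. -/
noncomputable def lambdaMinPos {m : Type*} [Fintype m] (M : Matrix m m ℝ) : ℝ :=
  sInf {μ : ℝ | 0 < μ ∧ ∃ v : m → ℝ, v ≠ 0 ∧ M.mulVec v = μ • v}

/-- `λ(𝒯)`: the smallest positive eigenvalue of `δ₁(𝒯)ᵀ δ₁(𝒯)`. -/
noncomputable def lam (F : Finset (Finset ℕ)) : ℝ :=
  lambdaMinPos ((delta1 F)ᵀ * delta1 F)

/-- The neighborhood of `x` in the support graph `Γ₀(F)`. -/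
def nbrs (F : Finset (Finset ℕ)) (x : ℕ) : Finset ℕ :=
  (vertsOf F).filter fun y => x ≠ y ∧ ∃ T ∈ F, x ∈ T ∧ y ∈ T

/-- `φ(t)`: the maximum of `λ(𝒯)` over triangle families with `|𝒯| = t`. -/
noncomputable def phi (t : ℕ) : ℝ :=
  sSup {r : ℝ | ∃ F : Finset (Finset ℕ), IsTriFam F ∧ F.card = t ∧ lam F = r}

/-- `Λ(t) = max_{1 ≤ s ≤ t} φ(s)`. -/
noncomputable def Lam (t : ℕ) : ℝ :=
  sSup {r : ℝ | ∃ s : ℕ, 1 ≤ s ∧ s ≤ t ∧ phi s = r}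

/-- `H(n) = min{ s ≥ 1 : φ(C(n,3)+s) > n - 1 }`. -/
noncomputable def Hfun (n : ℕ) : ℕ :=
  sInf {s : ℕ | 1 ≤ s ∧ (n : ℝ) - 1 < phi (n.choose 3 + s)}

/-- The triangle family `𝒯_{c,b}`: all 3-cliques of `K_c ∨ (b isolated vertices)`. -/
def Tcb (c b : ℕ) : Finset (Finset ℕ) :=
  ((Finset.Icc 1 c).powersetCard 3) ∪
    (Finset.Icc (c+1) (c+b)).biUnion
      (fun i => ((Finset.Icc 1 c).powersetCard 2).image (fun p => insert i p))

/-!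
Write `A = δ₁ᵀ δ₁`. Since no eigenvalue of `A` lies strictly between `0` and `λ`, we have
`λ A ≤ A²`. For an edge `e` contained in `d` triangles, the diagonal entries at `e` are
`A e e = d` and `A² e e = d² + 2 d`, hence `λ ≤ d + 2`. So if `n ≤ λ(F)`, every edge lies in at
least `n - 2` triangles.

For an `r`-uniform family in which every face of the shadow has codegree at least `m + 1`, the
shadow is `(r - 1)`-uniform with codegrees at least `m + 2`. Induction on `r` and double counting
of incidences yield at least `C(m + r, r)` members, with equality only for all `r`-subsets of an
`(m + r)`-set.

For the complete family on `n` vertices, view an edge cochain as an antisymmetric flow `f`. Summing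
the curls `f a b + f b c + f c a` over `c` gives `n f a b` plus a gradient, which the coboundary
kills; thus `A² = n A`, and `n` is the only positive eigenvalue.
-/

open scoped FinsetFamily MatrixOrder

lemma sum_pow_of_support_subsingleton {ι R : Type*} [Fintype ι] [Semiring R] {f : ι → R}
    (hf : f.support.Subsingleton) {k : ℕ} (hk : k ≠ 0) : (∑ i, f i) ^ k = ∑ i, f i ^ k := by
  obtain h | ⟨a, h⟩ := hf.eq_empty_or_singleton
  · simp [Function.support_eq_empty_iff.1 h, hk]
  · have hfa (i : ι) (hi : i ≠ a) : f i = 0 := by simpa [hi] using Set.ext_iff.1 h i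
    rw [Fintype.sum_eq_single a hfa, Fintype.sum_eq_single a fun i hi ↦ by simp [hfa i hi, hk]]

section Spectral

variable {m n : Type*} [Fintype m] [Fintype n]

lemma lambdaMinPos_le {A : Matrix m m ℝ} {μ : ℝ} (hμ : 0 < μ) {v : m → ℝ} (hv : v ≠ 0)
    (hA : A *ᵥ v = μ • v) : lambdaMinPos A ≤ μ :=
  csInf_le ⟨0, fun _ h ↦ h.1.le⟩ ⟨hμ, v, hv, hA⟩

theorem lambdaMinPos_smul_le_mul_self {A : Matrix m m ℝ} (hA : A.IsHermitian) :
    lambdaMinPos A • A ≤ A * A := by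
  classical
  have h_sa : IsSelfAdjoint A := hA
  have h_nonneg : 0 ≤ lambdaMinPos A := Real.sInf_nonneg fun _ h ↦ h.1.le
  have h_cfc : A * A - lambdaMinPos A • A = cfc (fun x ↦ x ^ 2 - lambdaMinPos A * x) A := by
    rw [cfc_sub _ _ A, cfc_pow_id A 2, cfc_const_mul_id _ A, sq]
  rw [← sub_nonneg, h_cfc]
  refine cfc_nonneg fun μ hμ ↦ ?_
  obtain hμ0 | hμ0 := le_or_gt μ 0
  · nlinarith
  · rw [← spectrum_toLin'] at hμ
    obtain ⟨v, hv, hv0⟩ := (Module.End.HasEigenvalue.of_mem_spectrum hμ).exists_hasEigenvector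
    have h_min := lambdaMinPos_le hμ0 hv0 (by simpa using Module.End.mem_eigenspace_iff.1 hv)
    nlinarith

theorem lambdaMinPos_eq_of_mul_self {A : Matrix m m ℝ} {c : ℝ} (hc : 0 < c) (hA : A ≠ 0)
    (hAA : A * A = c • A) : lambdaMinPos A = c := by
  classical
  have hAv (v : m → ℝ) : A *ᵥ A *ᵥ v = c • A *ᵥ v := by rw [mulVec_mulVec, hAA, smul_mulVec]
  obtain ⟨v, hv⟩ : ∃ v, A *ᵥ v ≠ 0 := by
    contrapose! hA
    exact ext_of_mulVec_single fun i ↦ by rw [hA, zero_mulVec]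
  refine le_antisymm (lambdaMinPos_le hc hv (hAv v)) (le_csInf ⟨c, hc, _, hv, hAv v⟩ ?_)
  rintro μ ⟨hμ, w, hw, hAw⟩
  have h := hAv w
  rw [hAw, mulVec_smul, hAw] at h
  exact (smul_left_injective ℝ (smul_ne_zero hμ.ne' hw) h).ge

theorem lambdaMinPos_transpose_mul_self_le {M : Matrix m n ℝ} {j : n} {d r : ℝ}
    (h_sign : ∀ i, M i j ∈ ({-1, 0, 1} : Set ℝ)) (h_col : ∑ i, M i j ^ 2 = d) (hd : 0 < d)
    (h_row : ∀ i, ∑ k, M i k ^ 2 = r)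
    (h_lin : ∀ k ≠ j, (Function.support fun i ↦ M i j * M i k).Subsingleton) :
    lambdaMinPos (Mᵀ * M) ≤ d + r - 1 := by
  classical
  set A := Mᵀ * M
  have hA_apply (k : n) : A j k = ∑ i, M i j * M i k := rfl
  have hA_diag : A j j = d := by simp only [hA_apply, ← sq, h_col]
  have hA_symm (k : n) : A k j = A j k := sum_congr rfl fun i _ ↦ mul_comm (M i k) (M i j)
  have hM_sq (i : m) : M i j ^ 2 * M i j ^ 2 = M i j ^ 2 := by
    obtain h | h | h : M i j = -1 ∨ M i j = 0 ∨ M i j = 1 := h_sign i <;> simp [h]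
  -- Two columns meet in at most one row, so the square of each off-diagonal `A j k` is a single
  -- squared product and summing over `k` before `i` is possible.
  have hAA : (A * A) j j = d * (d + r - 1) :=
    calc (A * A) j j = ∑ k, A j k ^ 2 := by
          rw [mul_apply]
          exact sum_congr rfl fun k _ ↦ by rw [hA_symm, sq]
      _ = d ^ 2 + ∑ k ∈ univ.erase j, ∑ i, (M i j * M i k) ^ 2 := by
          rw [← add_sum_erase _ _ (mem_univ j), hA_diag]
          congr! 2 with k hk
          exact sum_pow_of_support_subsingleton (h_lin k (ne_of_mem_erase hk)) two_ne_zero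
      _ = d ^ 2 + ∑ i, M i j ^ 2 * (r - M i j ^ 2) := by
          rw [sum_comm]
          congr! 2 with i
          rw [← h_row i, ← add_sum_erase _ _ (mem_univ j), add_sub_cancel_left, mul_sum]
          simp only [mul_pow]
      _ = d * (d + r - 1) := by
          simp only [mul_sub, hM_sq, sum_sub_distrib, ← sum_mul, h_col]
          ring
  have h_herm : A.IsHermitian := isHermitian_conjTranspose_mul_self M
  have h_le := (le_iff.1 (lambdaMinPos_smul_le_mul_self h_herm)).diag_nonneg (i := j)
  rw [Matrix.sub_apply, Matrix.smul_apply, hAA, hA_diag, smul_eq_mul] at h_le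
  nlinarith

end Spectral

section Codegree

variable {α : Type*} [DecidableEq α] {F : Finset (Finset α)} {m r : ℕ}

/-- The codegree of a face `e` in a set family `F`: the number of members of `F` containing `e`.
It is defined for every set `e`, but lower bounds on it are only ever imposed on the shadow of `F`,
as for the positive minimum codegree of a hypergraph. -/
def codegree (F : Finset (Finset α)) (e : Finset α) : ℕ := #{T ∈ F | e ⊆ T}

lemma shadow_nonempty (hF : (F : Set (Finset α)).Sized (r + 1)) (hne : F.Nonempty) :
    (∂ F).Nonempty := by
  obtain ⟨T, hT⟩ := hne
  obtain ⟨x, hx⟩ : T.Nonempty := card_pos.1 (by rw [hF hT]; exact r.succ_pos)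
  exact ⟨T.erase x, erase_mem_shadow hT hx⟩

lemma card_shadow_mul_le (hF : (F : Set (Finset α)).Sized (r + 1))
    (h : ∀ e ∈ ∂ F, m ≤ codegree F e) : #(∂ F) * m ≤ #F * (r + 1) := by
  refine card_mul_le_card_mul (fun e T : Finset α ↦ e ⊆ T) h fun T hT ↦ ?_
  calc #{e ∈ ∂ F | e ⊆ T} ≤ #(T.powersetCard r) := by
        gcongr
        intro e he
        obtain ⟨he, heT⟩ := mem_filter.1 he
        exact mem_powersetCard.2 ⟨heT, hF.shadow he⟩
    _ = r + 1 := by rw [card_powersetCard, hF hT, Nat.choose_succ_self_right]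

-- If `insert y g` is a face, then `g` lies in that face and in `T.erase y` for every `T ∈ F`
-- containing it.
lemma succ_le_codegree_shadow (h : ∀ e ∈ ∂ F, m ≤ codegree F e) {g : Finset α} (hg : g ∈ ∂ (∂ F)) :
    m + 1 ≤ codegree (∂ F) g := by
  obtain ⟨y, hyg, he⟩ := mem_shadow_iff_insert_mem.1 hg
  set e := insert y g
  have hye : y ∈ e := mem_insert_self y g
  have h_new : e ∉ {T ∈ F | e ⊆ T}.image (erase · y) := by
    simp only [mem_image, not_exists, not_and]
    exact fun T _ hT ↦ notMem_erase y T (hT ▸ hye)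
  have h_inj : Set.InjOn (erase · y) {T ∈ F | e ⊆ T} :=
    (erase_injOn' y).mono fun T hT ↦ hT.2 hye
  have h_sub : insert e ({T ∈ F | e ⊆ T}.image (erase · y)) ⊆ {e' ∈ ∂ F | g ⊆ e'} := by
    intro e' he'
    obtain rfl | he' := mem_insert.1 he'
    · exact mem_filter.2 ⟨he, subset_insert y g⟩
    · obtain ⟨T, hT, rfl⟩ := mem_image.1 he'
      obtain ⟨hT, heT⟩ := mem_filter.1 hT
      exact mem_filter.2 ⟨erase_mem_shadow hT (heT hye),
        subset_erase.2 ⟨(subset_insert y g).trans heT, hyg⟩⟩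
  calc m + 1 ≤ #{T ∈ F | e ⊆ T} + 1 := by gcongr; exact h e he
    _ = #(insert e ({T ∈ F | e ⊆ T}.image (erase · y))) := by
        rw [card_insert_of_notMem h_new, card_image_of_injOn (mod_cast h_inj)]
    _ ≤ codegree (∂ F) g := card_le_card h_sub

lemma add_choose_mul_eq (m r : ℕ) :
    (m + (r + 1)).choose (r + 1) * (r + 1) = (m + 1 + r).choose r * (m + 1) := by
  rw [Nat.choose_succ_right_eq]
  congr 2 <;> omega

theorem choose_le_card_of_le_codegree (hF : (F : Set (Finset α)).Sized r) (hne : F.Nonempty)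
    (h : ∀ e ∈ ∂ F, m + 1 ≤ codegree F e) : (m + r).choose r ≤ #F := by
  induction r generalizing F m with
  | zero => simpa using hne
  | succ r ih =>
    have h_shadow : (m + 1 + r).choose r ≤ #(∂ F) :=
      ih hF.shadow (shadow_nonempty hF hne) fun _ ↦ succ_le_codegree_shadow h
    refine Nat.le_of_mul_le_mul_right ?_ r.succ_pos
    calc (m + (r + 1)).choose (r + 1) * (r + 1)
        = (m + 1 + r).choose r * (m + 1) := add_choose_mul_eq m r
      _ ≤ #(∂ F) * (m + 1) := by gcongr
      _ ≤ #F * (r + 1) := card_shadow_mul_le hF h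

lemma card_shadow_eq_of_card_eq (hF : (F : Set (Finset α)).Sized (r + 1))
    (h : ∀ e ∈ ∂ F, m + 1 ≤ codegree F e) (hcard : #F = (m + (r + 1)).choose (r + 1)) :
    #(∂ F) = (m + 1 + r).choose r := by
  have hne : F.Nonempty := card_pos.1 (hcard ▸ Nat.choose_pos (Nat.le_add_left _ m))
  refine le_antisymm (Nat.le_of_mul_le_mul_right ?_ m.succ_pos)
    (choose_le_card_of_le_codegree hF.shadow (shadow_nonempty hF hne) fun _ ↦
      succ_le_codegree_shadow h)
  calc #(∂ F) * (m + 1) ≤ #F * (r + 1) := card_shadow_mul_le hF h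
    _ = (m + 1 + r).choose r * (m + 1) := by rw [hcard, add_choose_mul_eq]

theorem exists_eq_powersetCard_of_card_eq (hF : (F : Set (Finset α)).Sized (r + 1))
    (h : ∀ e ∈ ∂ F, m + 1 ≤ codegree F e) (hcard : #F = (m + (r + 1)).choose (r + 1)) :
    ∃ S : Finset α, #S = m + (r + 1) ∧ F = S.powersetCard (r + 1) := by
  induction r generalizing F m with
  | zero =>
    have h_sub : F ⊆ (F.sup id).powersetCard 1 := fun T hT ↦
      mem_powersetCard.2 ⟨le_sup (f := id) hT, hF hT⟩
    have h_card : #((F.sup id).powersetCard 1) ≤ #F := by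
      rw [card_powersetCard, Nat.choose_one_right, sup_eq_biUnion]
      simpa using card_biUnion_le_card_mul F id 1 fun T hT ↦ (hF hT).le
    have h_eq := eq_of_subset_of_card_le h_sub h_card
    refine ⟨F.sup id, ?_, h_eq⟩
    rw [← Nat.choose_one_right #(F.sup id), ← card_powersetCard, ← h_eq, hcard, zero_add,
      Nat.choose_one_right]
  | succ r ih =>
    obtain ⟨S, hS, h_shadow⟩ :=
      ih hF.shadow (fun _ ↦ succ_le_codegree_shadow h) (card_shadow_eq_of_card_eq hF h hcard)
    have h_sub : F ⊆ S.powersetCard (r + 2) := by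
      refine fun T hT ↦ mem_powersetCard.2 ⟨fun x hx ↦ ?_, hF hT⟩
      obtain ⟨y, hy, hyx⟩ := exists_mem_ne (by rw [hF hT]; omega) x
      have h_face := h_shadow ▸ erase_mem_shadow hT hy
      exact (mem_powersetCard.1 h_face).1 (mem_erase.2 ⟨hyx.symm, hx⟩)
    have hS' : #S = m + (r + 2) := by omega
    exact ⟨S, hS', eq_of_subset_of_card_le h_sub (by rw [card_powersetCard, hS', hcard])⟩

end Codegree

section Incidence

variable {F : Finset (Finset ℕ)} {T e : Finset ℕ}

lemma mem_edgesOf : e ∈ edgesOf F ↔ ∃ T ∈ F, e ⊆ T ∧ #e = 2 := by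
  simp [edgesOf]

lemma edgesOf_eq_shadow (hF : (F : Set (Finset ℕ)).Sized 3) : edgesOf F = ∂ F := by
  ext e
  rw [mem_edgesOf, mem_shadow_iff_exists_mem_card_add_one]
  refine exists_congr fun T ↦ and_congr_right fun hT ↦ and_congr_right fun _ ↦ ?_
  rw [hF hT]
  omega

lemma triSign_sq (T e : Finset ℕ) :
    triSign T e ^ 2 = if e ⊆ T ∧ #e = 2 ∧ #T = 3 then 1 else 0 := by
  unfold triSign
  split_ifs <;> norm_num

lemma triSign_ne_zero : triSign T e ≠ 0 ↔ e ⊆ T ∧ #e = 2 ∧ #T = 3 := by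
  rw [← sq_eq_zero_iff.ne, triSign_sq]
  simp

/-- The simplicial coboundary of an edge cochain `v`, evaluated at a triangle `T`; this is the
function computed by `delta1`. Cochains are total functions on `Finset ℕ`, which avoids carrying
membership proofs in a given family. -/
noncomputable def coboundary (v : Finset ℕ → ℝ) (T : Finset ℕ) : ℝ :=
  ∑ e ∈ T.powersetCard 2, triSign T e * v e

lemma delta1_mulVec (v : Finset ℕ → ℝ) (T : {T // T ∈ F}) :
    (delta1 F *ᵥ fun e ↦ v e) T = coboundary v T := by
  have h_edges : T.1.powersetCard 2 ⊆ edgesOf F :=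
    subset_biUnion_of_mem (fun T : Finset ℕ ↦ T.powersetCard 2) T.2
  have h_zero : ∀ e ∈ edgesOf F, e ∉ T.1.powersetCard 2 → triSign T e * v e = 0 := by
    intro e _ he
    contrapose! he
    obtain ⟨heT, he2, -⟩ := triSign_ne_zero.1 (left_ne_zero_of_mul he)
    exact mem_powersetCard.2 ⟨heT, he2⟩
  rw [coboundary, sum_subset h_edges h_zero, ← sum_coe_sort]
  rfl

lemma coboundary_triSign (hT : #T = 3) : coboundary (triSign T) T = 3 := by
  have h_one : ∀ e ∈ T.powersetCard 2, triSign T e * triSign T e = 1 := by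
    intro e he
    rw [← sq, triSign_sq, if_pos ⟨(mem_powersetCard.1 he).1, (mem_powersetCard.1 he).2, hT⟩]
  rw [coboundary, sum_congr rfl h_one, sum_const, card_powersetCard, hT]
  norm_num [Nat.choose]

lemma eq_union_of_card_eq_two {e' : Finset ℕ} (hT : #T = 3) (he : #e = 2) (he' : #e' = 2)
    (hne : e ≠ e') (heT : e ⊆ T) (heT' : e' ⊆ T) : T = e ∪ e' := by
  refine (eq_of_subset_of_card_le (union_subset heT heT') ?_).symm
  have h_lt : #e < #(e ∪ e') := card_lt_card <| subset_union_left.ssubset_of_ne fun h ↦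
    hne (eq_of_subset_of_card_le (union_eq_left.1 h.symm) (by omega)).symm
  omega

lemma delta1_mem (T : {T // T ∈ F}) (e : {e // e ∈ edgesOf F}) :
    delta1 F T e ∈ ({-1, 0, 1} : Set ℝ) := by
  rw [delta1, of_apply, triSign]
  split_ifs <;> simp

lemma delta1_row_sum_sq (hF : (F : Set (Finset ℕ)).Sized 3) (T : {T // T ∈ F}) :
    ∑ e, delta1 F T e ^ 2 = 3 := by
  rw [← coboundary_triSign (hF T.2), ← delta1_mulVec]
  exact sum_congr rfl fun e _ ↦ sq _

lemma delta1_col_sum_sq (hF : (F : Set (Finset ℕ)).Sized 3) (e : {e // e ∈ edgesOf F}) :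
    ∑ T, delta1 F T e ^ 2 = codegree F e := by
  obtain ⟨_, _, _, he⟩ := mem_edgesOf.1 e.2
  rw [codegree, ← sum_boole, ← sum_coe_sort F]
  refine sum_congr rfl fun T _ ↦ ?_
  simp only [delta1, of_apply, triSign_sq, he, hF T.2, and_true]

lemma delta1_support_subsingleton {e e' : {e // e ∈ edgesOf F}} (hne : e' ≠ e) :
    (Function.support fun T ↦ delta1 F T e * delta1 F T e').Subsingleton := by
  have h_union (T : {T // T ∈ F}) (hT : delta1 F T e * delta1 F T e' ≠ 0) : T.1 = e.1 ∪ e'.1 := by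
    obtain ⟨heT, he, hT3⟩ := triSign_ne_zero.1 (left_ne_zero_of_mul hT)
    obtain ⟨heT', he', -⟩ := triSign_ne_zero.1 (right_ne_zero_of_mul hT)
    exact eq_union_of_card_eq_two hT3 he he' (Subtype.coe_ne_coe.2 hne.symm) heT heT'
  exact fun T hT T' hT' ↦ Subtype.ext ((h_union T hT).trans (h_union T' hT').symm)

theorem lam_le_codegree_add_two (hF : (F : Set (Finset ℕ)).Sized 3) (he : e ∈ edgesOf F) :
    lam F ≤ codegree F e + 2 := by
  obtain ⟨T, hT, heT, -⟩ := mem_edgesOf.1 he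
  have h_pos : 0 < codegree F e := card_pos.2 ⟨T, mem_filter.2 ⟨hT, heT⟩⟩
  lift e to {e // e ∈ edgesOf F} using he
  calc lam F ≤ codegree F e + 3 - 1 :=
        lambdaMinPos_transpose_mul_self_le (fun T ↦ delta1_mem T e) (delta1_col_sum_sq hF e)
          (mod_cast h_pos) (delta1_row_sum_sq hF) fun _ ↦ delta1_support_subsingleton
    _ = codegree F e + 2 := by ring

end Incidence

section Complete

/-- The sign of the oriented edge from `a` to `b` relative to its increasing orientation, with value
`0` when `a = b`. -/
noncomputable def orient (a b : ℕ) : ℝ := if a < b then 1 else if b < a then -1 else 0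

lemma orient_self (a : ℕ) : orient a a = 0 := by simp [orient]

lemma orient_swap (a b : ℕ) : orient b a = -orient a b := by
  obtain h | h | h := lt_trichotomy a b <;> simp [orient, h, h.not_gt]

lemma orient_mul_self {a b : ℕ} (h : a ≠ b) : orient a b * orient a b = 1 := by
  obtain h | h := h.lt_or_gt <;> simp [orient, h, h.not_gt]

lemma triSign_insert {e : Finset ℕ} (he : #e = 2) {x : ℕ} (hx : x ∉ e) :
    triSign (insert x e) e = if (∀ y ∈ e, y < x) ∨ ∀ y ∈ e, x < y then 1 else -1 := by
  have h_ne (y : ℕ) (hy : y ∈ e) : y ≠ x := ne_of_mem_of_not_mem hy hx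
  have h_max : ({x} : Finset ℕ).max = (insert x e).max ↔ ∀ y ∈ e, y < x := by
    rw [max_insert, max_singleton, left_eq_sup, Finset.max_le_iff]
    exact forall₂_congr fun y hy ↦ WithBot.coe_le_coe.trans (h_ne y hy).le_iff_lt
  have h_min : ({x} : Finset ℕ).min = (insert x e).min ↔ ∀ y ∈ e, x < y := by
    rw [min_insert, min_singleton, left_eq_inf, Finset.le_min_iff]
    exact forall₂_congr fun y hy ↦ WithTop.coe_le_coe.trans (h_ne y hy).symm.le_iff_lt
  have h_face : e ⊆ insert x e ∧ #e = 2 ∧ #(insert x e) = 3 :=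
    ⟨subset_insert x e, he, by rw [card_insert_of_notMem hx, he]⟩
  rw [triSign, if_pos h_face, insert_sdiff_cancel hx]
  simp only [h_max, h_min]

lemma triSign_insert_pair {a b c : ℕ} (hab : a ≠ b) (hbc : b ≠ c) (hca : c ≠ a) :
    triSign {c, a, b} {a, b} = orient c a * orient c b := by
  rw [triSign_insert (card_pair hab) (by simp [hca, hbc.symm])]
  obtain ha | ha := hca.lt_or_gt <;> obtain hb | hb := hbc.lt_or_gt <;>
    simp [orient, ha, hb, ha.not_gt, hb.not_gt]

/-- The edge cochain `v` as a flow, that is, an antisymmetric function of ordered pairs of vertices.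
Flows turn sums over edges into sums over vertices, the diagonal contributing `0`. -/
noncomputable def edgeFlow (v : Finset ℕ → ℝ) (a b : ℕ) : ℝ := orient a b * v {a, b}

lemma edgeFlow_self (v : Finset ℕ → ℝ) (a : ℕ) : edgeFlow v a a = 0 := by
  rw [edgeFlow, orient_self, zero_mul]

lemma edgeFlow_swap (v : Finset ℕ → ℝ) (a b : ℕ) : edgeFlow v b a = -edgeFlow v a b := by
  rw [edgeFlow, edgeFlow, orient_swap, pair_comm, neg_mul]

/-- The curl of a flow `f` along the closed walk `a → b → c → a`; it is the coboundary of an edge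
cochain up to the orientation sign of the triangle. -/
def curl (f : ℕ → ℕ → ℝ) (a b c : ℕ) : ℝ := f a b + f b c + f c a

/-- The orientation sign of the ordered triangle `(a, b, c)` of distinct vertices: `1` if it is an
even permutation of the increasing order and `-1` otherwise. -/
noncomputable def cyclicSign (a b c : ℕ) : ℝ := -(orient a b * orient b c * orient c a)

lemma cyclicSign_rotate (a b c : ℕ) : cyclicSign b c a = cyclicSign a b c := by
  rw [cyclicSign, cyclicSign]
  ring

lemma cyclicSign_mul_self {a b c : ℕ} (hab : a ≠ b) (hbc : b ≠ c) (hca : c ≠ a) :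
    cyclicSign a b c * cyclicSign a b c = 1 := by
  rw [cyclicSign, neg_mul_neg, mul_mul_mul_comm, mul_mul_mul_comm (orient a b),
    orient_mul_self hab, orient_mul_self hbc, orient_mul_self hca, one_mul, one_mul]

lemma orient_mul_triSign {a b c : ℕ} (hab : a ≠ b) (hbc : b ≠ c) (hca : c ≠ a) :
    orient a b * triSign {c, a, b} {a, b} = cyclicSign a b c := by
  rw [triSign_insert_pair hab hbc hca, cyclicSign, orient_swap b c]
  ring

lemma triSign_mul_eq_cyclicSign_mul {a b c : ℕ} (hab : a ≠ b) (hbc : b ≠ c) (hca : c ≠ a)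
    (v : Finset ℕ → ℝ) :
    triSign {c, a, b} {a, b} * v {a, b} = cyclicSign a b c * edgeFlow v a b := by
  rw [← orient_mul_triSign hab hbc hca, edgeFlow]
  linear_combination (-triSign {c, a, b} {a, b} * v {a, b}) * orient_mul_self hab

lemma coboundary_triple (v : Finset ℕ → ℝ) {a b c : ℕ} (hab : a ≠ b) (hbc : b ≠ c)
    (hca : c ≠ a) : coboundary v {c, a, b} = cyclicSign a b c * curl (edgeFlow v) a b c := by
  have h_edges : ({c, a, b} : Finset ℕ).powersetCard 2 = {{a, b}, {c, a}, {c, b}} := by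
    have h_ab : ({a, b} : Finset ℕ).powersetCard 2 = {{a, b}} := by
      rw [← card_pair hab, powersetCard_self]
    rw [powersetCard_succ_insert (by simp [hca, hbc.symm]), h_ab, powersetCard_one]
    simpa using insert_comm {c, a} ({a, b} : Finset ℕ) {{c, b}}
  have h_rotate (a b c : ℕ) : ({c, a, b} : Finset ℕ) = {a, b, c} := by
    rw [insert_comm, pair_comm]
  have h_ab : triSign {c, a, b} {a, b} * v {a, b} = cyclicSign a b c * edgeFlow v a b :=
    triSign_mul_eq_cyclicSign_mul hab hbc hca v
  have h_bc : triSign {c, a, b} {c, b} * v {c, b} = cyclicSign a b c * edgeFlow v b c := by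
    rw [h_rotate, pair_comm c b, triSign_mul_eq_cyclicSign_mul hbc hca hab, cyclicSign_rotate]
  have h_ca : triSign {c, a, b} {c, a} * v {c, a} = cyclicSign a b c * edgeFlow v c a := by
    rw [← h_rotate, triSign_mul_eq_cyclicSign_mul hca hab hbc, ← cyclicSign_rotate]
  have h_notMem : ({a, b} : Finset ℕ) ∉ ({{c, a}, {c, b}} : Finset (Finset ℕ)) := by
    grind
  have h_ne : ({c, a} : Finset ℕ) ≠ {c, b} := by
    grind
  rw [coboundary, h_edges, sum_insert h_notMem, sum_pair h_ne, h_ab, h_bc, h_ca, curl]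
  ring

lemma sum_powersetCard_triSign_mul {S e : Finset ℕ} (he : e ∈ S.powersetCard 2)
    (g : Finset ℕ → ℝ) : ∑ T ∈ S.powersetCard 3, triSign T e * g T =
      ∑ c ∈ S \ e, triSign (insert c e) e * g (insert c e) := by
  obtain ⟨heS, he2⟩ := mem_powersetCard.1 he
  have h_inj : Set.InjOn (insert · e) (S \ e : Finset ℕ) :=
    (insert_inj_on e).mono fun c hc ↦ (mem_sdiff.1 hc).2
  rw [← sum_image (f := fun T ↦ triSign T e * g T) h_inj]
  refine (sum_subset (fun T hT ↦ ?_) fun T hT hT' ↦ ?_).symm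
  · obtain ⟨c, hc, rfl⟩ := mem_image.1 hT
    obtain ⟨hcS, hce⟩ := mem_sdiff.1 hc
    exact mem_powersetCard.2 ⟨insert_subset hcS heS, by rw [card_insert_of_notMem hce, he2]⟩
  · obtain ⟨hTS, hT3⟩ := mem_powersetCard.1 hT
    contrapose! hT'
    have heT : e ⊆ T := (triSign_ne_zero.1 (left_ne_zero_of_mul hT')).1
    obtain ⟨c, hce, rfl⟩ := exists_eq_insert_iff.2 ⟨heT, by rw [he2, hT3]⟩
    exact mem_image_of_mem _ (mem_sdiff.2 ⟨hTS (mem_insert_self c e), hce⟩)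

/-- The up-Laplacian `δ₁ᵀ δ₁` of a triangle family `F` on edge cochains, written on total functions
as for `coboundary`. -/
noncomputable def upLaplacian (F : Finset (Finset ℕ)) (v : Finset ℕ → ℝ) (e : Finset ℕ) : ℝ :=
  ∑ T ∈ F, triSign T e * coboundary v T

lemma edgeFlow_upLaplacian {S : Finset ℕ} (v : Finset ℕ → ℝ) {a b : ℕ} (ha : a ∈ S) (hb : b ∈ S)
    (hab : a ≠ b) :
    edgeFlow (upLaplacian (S.powersetCard 3) v) a b =
      #S * edgeFlow v a b + (∑ c ∈ S, edgeFlow v b c - ∑ c ∈ S, edgeFlow v a c) := by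
  have h_curl : ∀ c ∈ S \ {a, b},
      orient a b * (triSign {c, a, b} {a, b} * coboundary v {c, a, b}) =
        curl (edgeFlow v) a b c := by
    intro c hc
    obtain ⟨hca, hcb⟩ : c ≠ a ∧ c ≠ b := by simpa using (mem_sdiff.1 hc).2
    rw [coboundary_triple v hab hcb.symm hca, ← mul_assoc, orient_mul_triSign hab hcb.symm hca,
      ← mul_assoc, cyclicSign_mul_self hab hcb.symm hca, one_mul]
  have h_degenerate : ∀ c ∈ ({a, b} : Finset ℕ), curl (edgeFlow v) a b c = 0 := by
    intro c hc
    obtain rfl | rfl : c = a ∨ c = b := by simpa using hc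
    · rw [curl, edgeFlow_self, edgeFlow_swap v c b, add_neg_cancel, zero_add]
    · rw [curl, edgeFlow_self, edgeFlow_swap v a c, add_zero, add_neg_cancel]
  have h_sub : {a, b} ⊆ S := insert_subset ha (singleton_subset_iff.2 hb)
  calc edgeFlow (upLaplacian (S.powersetCard 3) v) a b
      = ∑ c ∈ S \ {a, b}, curl (edgeFlow v) a b c := by
        rw [edgeFlow, upLaplacian, sum_powersetCard_triSign_mul
          (mem_powersetCard.2 ⟨h_sub, card_pair hab⟩), mul_sum, sum_congr rfl h_curl]
    _ = ∑ c ∈ S, curl (edgeFlow v) a b c := by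
        rw [← sum_sdiff h_sub, sum_eq_zero h_degenerate, add_zero]
    _ = _ := by
        simp only [curl, edgeFlow_swap v a, sum_add_distrib, sum_const, sum_neg_distrib,
          nsmul_eq_mul]
        ring

theorem coboundary_upLaplacian {S T : Finset ℕ} (hT : T ∈ S.powersetCard 3) (v : Finset ℕ → ℝ) :
    coboundary (upLaplacian (S.powersetCard 3) v) T = #S * coboundary v T := by
  obtain ⟨hTS, hT3⟩ := mem_powersetCard.1 hT
  obtain ⟨c, a, b, hca, hcb, hab, rfl⟩ := card_eq_three.1 hT3
  have hS (x : ℕ) (hx : x ∈ ({c, a, b} : Finset ℕ)) : x ∈ S := hTS hx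
  simp only [mem_insert, mem_singleton, forall_eq_or_imp, forall_eq] at hS
  obtain ⟨hc, ha, hb⟩ := hS
  rw [coboundary_triple _ hab hcb.symm hca, coboundary_triple _ hab hcb.symm hca, curl, curl,
    edgeFlow_upLaplacian v ha hb hab, edgeFlow_upLaplacian v hb hc hcb.symm,
    edgeFlow_upLaplacian v hc ha hca]
  ring

lemma transpose_delta1_mulVec {F : Finset (Finset ℕ)} (v : Finset ℕ → ℝ)
    (e : {e // e ∈ edgesOf F}) :
    ((delta1 F)ᵀ *ᵥ fun T ↦ coboundary v T) e = upLaplacian F v e := by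
  rw [upLaplacian, ← sum_coe_sort F]
  rfl

theorem delta1_powersetCard_mul_transpose_mul_self (S : Finset ℕ) :
    delta1 (S.powersetCard 3) * ((delta1 (S.powersetCard 3))ᵀ * delta1 (S.powersetCard 3)) =
      (#S : ℝ) • delta1 (S.powersetCard 3) := by
  set M := delta1 (S.powersetCard 3)
  refine ext_of_mulVec_single fun i ↦ ?_
  obtain ⟨v, hv⟩ := Subtype.val_injective.surjective_comp_right (Pi.single i (1 : ℝ))
  have hM (w : Finset ℕ → ℝ) : M *ᵥ (w ∘ Subtype.val) = coboundary w ∘ Subtype.val :=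
    funext (delta1_mulVec w)
  have hMt : Mᵀ *ᵥ (coboundary v ∘ Subtype.val) =
      upLaplacian (S.powersetCard 3) v ∘ Subtype.val := funext (transpose_delta1_mulVec v)
  rw [← hv, ← mulVec_mulVec, ← mulVec_mulVec, smul_mulVec, hM, hMt, hM]
  exact funext fun T ↦ coboundary_upLaplacian T.2 v

theorem lam_powersetCard {S : Finset ℕ} (hS : 3 ≤ #S) : lam (S.powersetCard 3) = #S := by
  set M := delta1 (S.powersetCard 3) with hM
  have h_ne : Mᵀ * M ≠ 0 := by
    rw [← conjTranspose_eq_transpose_of_trivial, Ne, conjTranspose_mul_self_eq_zero]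
    intro h
    obtain ⟨T, hT⟩ := powersetCard_nonempty.2 hS
    have h_norm := delta1_row_sum_sq (fun T hT ↦ (mem_powersetCard.1 hT).2) ⟨T, hT⟩
    rw [← hM, h] at h_norm
    simp at h_norm
  refine lambdaMinPos_eq_of_mul_self (mod_cast (by omega)) h_ne ?_
  rw [Matrix.mul_assoc, delta1_powersetCard_mul_transpose_mul_self, Matrix.mul_smul]

end Complete

section Extremal

variable {F : Finset (Finset ℕ)} {n : ℕ}

lemma sub_two_le_codegree (hF : IsTriFam F) (h : (n : ℝ) ≤ lam F) :
    ∀ e ∈ ∂ F, n - 2 ≤ codegree F e := by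
  intro e he
  rw [← edgesOf_eq_shadow hF.2] at he
  have h_le : (n : ℝ) ≤ codegree F e + 2 := h.trans (lam_le_codegree_add_two hF.2 he)
  exact Nat.sub_le_of_le_add (mod_cast h_le)

theorem choose_three_le_card (hn : 3 ≤ n) (hF : IsTriFam F) (h : (n : ℝ) ≤ lam F) :
    n.choose 3 ≤ #F := by
  obtain ⟨m, rfl⟩ := Nat.exists_eq_add_of_le' hn
  exact choose_le_card_of_le_codegree hF.2 hF.1 (sub_two_le_codegree hF h)

theorem exists_eq_powersetCard_three (hn : 3 ≤ n) (hF : IsTriFam F) (hcard : #F = n.choose 3)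
    (h : (n : ℝ) ≤ lam F) : ∃ S : Finset ℕ, #S = n ∧ F = S.powersetCard 3 := by
  obtain ⟨m, rfl⟩ := Nat.exists_eq_add_of_le' hn
  exact exists_eq_powersetCard_of_card_eq hF.2 (sub_two_le_codegree hF h) hcard

lemma lam_le_of_card_eq (hn : 3 ≤ n) (hF : IsTriFam F) (hcard : #F = n.choose 3) :
    lam F ≤ n := by
  by_contra! h_lt
  obtain ⟨S, rfl, rfl⟩ := exists_eq_powersetCard_three hn hF hcard h_lt.le
  exact h_lt.ne' (lam_powersetCard hn)

lemma isTriFam_powersetCard {S : Finset ℕ} (hS : 3 ≤ #S) : IsTriFam (S.powersetCard 3) :=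
  ⟨powersetCard_nonempty.2 hS, fun _ hT ↦ (mem_powersetCard.1 hT).2⟩

lemma exists_isTriFam_lam_eq (hn : 3 ≤ n) :
    ∃ F : Finset (Finset ℕ), IsTriFam F ∧ #F = n.choose 3 ∧ lam F = n := by
  have h_range : 3 ≤ #(range n) := by rwa [card_range]
  exact ⟨(range n).powersetCard 3, isTriFam_powersetCard h_range,
    by rw [card_powersetCard, card_range], by rw [lam_powersetCard h_range, card_range]⟩

end Extremal

/-- `φ(C(n,3)) = n`, with the full triangle family of an `n`-set as unique (up to
relabeling) extremizer; equivalently, `C(n,3)` is the least size of a triangle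
family with `λ(𝒯) ≥ n`, with the same unique minimizer. -/
theorem stmt7 (n : ℕ) (hn : 3 ≤ n) :
    phi (n.choose 3) = (n : ℝ) ∧
    (∀ F : Finset (Finset ℕ), IsTriFam F → F.card = n.choose 3 → lam F = (n : ℝ) →
      ∃ S : Finset ℕ, S.card = n ∧ F = S.powersetCard 3) ∧
    IsLeast {t : ℕ | ∃ F : Finset (Finset ℕ), IsTriFam F ∧ F.card = t ∧ (n : ℝ) ≤ lam F}
      (n.choose 3) ∧
    (∀ F : Finset (Finset ℕ), IsTriFam F → F.card = n.choose 3 → (n : ℝ) ≤ lam F →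
      ∃ S : Finset ℕ, S.card = n ∧ F = S.powersetCard 3) := by
  obtain ⟨K, hK, hK_card, hK_lam⟩ := exists_isTriFam_lam_eq hn
  have h_greatest : IsGreatest {r : ℝ | ∃ F, IsTriFam F ∧ #F = n.choose 3 ∧ lam F = r} n := by
    refine ⟨⟨K, hK, hK_card, hK_lam⟩, ?_⟩
    rintro _ ⟨F, hF, hcard, rfl⟩
    exact lam_le_of_card_eq hn hF hcard
  have h_least : IsLeast {t : ℕ | ∃ F, IsTriFam F ∧ #F = t ∧ (n : ℝ) ≤ lam F} (n.choose 3) := by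
    refine ⟨⟨K, hK, hK_card, hK_lam.ge⟩, ?_⟩
    rintro _ ⟨F, hF, rfl, h⟩
    exact choose_three_le_card hn hF h
  exact ⟨h_greatest.csSup_eq,
    fun F hF hcard h ↦ exists_eq_powersetCard_three hn hF hcard h.ge, h_least,
    fun F hF hcard h ↦ exists_eq_powersetCard_three hn hF hcard h⟩
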